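/- If gcd(r, n) = 1, then L_r(x) = x^{q^r} + a x is a permutation polynomial over F_{q^n} if and only if (-1)^n · N(a) ≠ 1 where N(a) = a^{(q^n-1)/(q-1)}; and when this holds, L_r^{-1}(x) = [N(a)/(N(a)+(-1)^{n-1})] · Σ_{i=0}^{n-1} (-1)^i a^{-(q^{(i+1)r}-1)/(q^r-1)} x^{q^{ir}}. -/

import Mathlib

/-!
Let `σ` be an endomorphism of order `n` of a field, put `L x = σ x + a x` and
`T x = ∑_{i<n} (-1)^i N_{i+1}(a⁻¹) σ^i x` with `N_m(b) = b · σ b ⋯ σ^{m-1} b`. Both `T ∘ L` and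
`L ∘ T` telescope to multiplication by the `σ`-invariant constant `1 - (-1)^n / N_n(a)`. If it is
nonzero, `L` is invertible with inverse a multiple of `T`; if it vanishes, then `L ∘ T = 0`, while
`T ≠ 0` by Artin's independence of characters, so `L` is not injective. Over a field with `q ^ n`
elements take `σ x = x ^ q ^ r`: as `r` is prime to `n`, it has order `n` and the same norm
`N_n` as `x ↦ x ^ q`.
-/

open Finset

section CommRing

variable {R : Type*} [CommRing R]

/-- The partial norm `a · σ a · σ² a ⋯ σ^{m-1} a` of `a` along the endomorphism `σ`. When `σ` has
order `m`, this is the norm of `a` to the fixed ring of `σ`. -/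
def partialNorm (σ : R →+* R) (m : ℕ) (a : R) : R :=
  ∏ j ∈ range m, (σ ^ j) a

/-- The sum `∑_{i<m} (-1)^i N_{i+1}(b) σ^i x`, with `N` the partial norm along `σ`: up to a scalar,
the inverse of `x ↦ σ x + b⁻¹ x` when `σ` has order `m` and that map is bijective. -/
def alternatingNormSum (σ : R →+* R) (m : ℕ) (b x : R) : R :=
  ∑ i ∈ range m, (-1) ^ i * partialNorm σ (i + 1) b * (σ ^ i) x

lemma partialNorm_succ (σ : R →+* R) (m : ℕ) (a : R) :
    partialNorm σ (m + 1) a = partialNorm σ m a * (σ ^ m) a :=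
  prod_range_succ _ m

lemma partialNorm_succ' (σ : R →+* R) (m : ℕ) (a : R) :
    partialNorm σ (m + 1) a = σ (partialNorm σ m a) * a := by
  simp only [partialNorm, prod_range_succ', map_prod, pow_succ', RingHom.mul_def,
    RingHom.comp_apply, pow_zero, RingHom.one_def, RingHom.id_apply]

lemma map_partialNorm_of_pow_eq_one {σ : R →+* R} {n : ℕ} (hσ : σ ^ n = 1) (a : R) :
    σ (partialNorm σ n a) = partialNorm σ n a := by
  cases n with
  | zero => simp [partialNorm]
  | succ m =>
    have hlast : σ ((σ ^ m) a) = a := by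
      rw [← RingHom.comp_apply, ← RingHom.mul_def, ← pow_succ', hσ, RingHom.one_def,
        RingHom.id_apply]
    rw [partialNorm_succ, map_mul, hlast, ← partialNorm_succ', partialNorm_succ]

lemma partialNorm_pow_of_coprime {τ : R →+* R} {n r : ℕ} (hτ : τ ^ n = 1) (hr : r.Coprime n)
    (a : R) : partialNorm (τ ^ r) n a = partialNorm τ n a := by
  rcases n.eq_zero_or_pos with rfl | hn
  · simp [partialNorm]
  have hmaps : Set.MapsTo (fun j => r * j % n) (range n) (range n) :=
    fun j _ => mem_coe.2 (mem_range.2 (Nat.mod_lt _ hn))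
  have hinj : Set.InjOn (fun j => r * j % n) (range n) := fun i hi j hj hij =>
    (Nat.ModEq.cancel_left_of_coprime (Nat.coprime_comm.1 hr) hij).eq_of_lt_of_lt
      (mem_range.1 hi) (mem_range.1 hj)
  refine prod_nbij _ hmaps hinj (surjOn_of_injOn_of_card_le _ hmaps hinj le_rfl) fun j _ => ?_
  rw [← pow_mul, ← pow_eq_pow_mod _ hτ]

lemma alternatingNormSum_succ (σ : R →+* R) (m : ℕ) (b x : R) :
    alternatingNormSum σ (m + 1) b x =
      alternatingNormSum σ m b x + (-1) ^ m * partialNorm σ (m + 1) b * (σ ^ m) x :=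
  sum_range_succ _ m

lemma alternatingNormSum_map_add_mul (σ : R →+* R) {a b : R} (hba : b * a = 1) (m : ℕ) (x : R) :
    alternatingNormSum σ m b (σ x + a * x) = x - (-1) ^ m * partialNorm σ m b * (σ ^ m) x := by
  induction m with
  | zero => simp [alternatingNormSum, partialNorm]
  | succ m ih =>
    have hcancel : (σ ^ m) b * (σ ^ m) a = 1 := by rw [← map_mul, hba, map_one]
    have hshift : (σ ^ m) (σ x) = (σ ^ (m + 1)) x := by rw [pow_succ]; rfl
    rw [alternatingNormSum_succ, ih, map_add, map_mul, hshift, partialNorm_succ]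
    linear_combination (-1) ^ m * partialNorm σ m b * (σ ^ m) x * hcancel

lemma map_alternatingNormSum_add_mul (σ : R →+* R) {a b : R} (hba : b * a = 1) (m : ℕ) (x : R) :
    σ (alternatingNormSum σ m b x) + a * alternatingNormSum σ m b x =
      x - (-1) ^ m * σ (partialNorm σ m b) * (σ ^ m) x := by
  induction m with
  | zero => simp [alternatingNormSum, partialNorm]
  | succ m ih =>
    have hcancel : partialNorm σ (m + 1) b * a = σ (partialNorm σ m b) := by
      rw [partialNorm_succ', mul_assoc, hba, mul_one]
    have hshift : σ ((σ ^ m) x) = (σ ^ (m + 1)) x := by rw [pow_succ']; rfl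
    simp only [alternatingNormSum_succ, map_add, map_mul, map_pow, map_neg, map_one, hshift]
    linear_combination ih + (-1) ^ m * (σ ^ m) x * hcancel

lemma alternatingNormSum_map_add_mul_of_pow_eq_one {σ : R →+* R} {n : ℕ} (hσ : σ ^ n = 1)
    {a b : R} (hba : b * a = 1) (x : R) :
    alternatingNormSum σ n b (σ x + a * x) = (1 - (-1) ^ n * partialNorm σ n b) * x := by
  rw [alternatingNormSum_map_add_mul σ hba, hσ, RingHom.one_def, RingHom.id_apply]
  ring

lemma map_alternatingNormSum_add_mul_of_pow_eq_one {σ : R →+* R} {n : ℕ} (hσ : σ ^ n = 1)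
    {a b : R} (hba : b * a = 1) (x : R) :
    σ (alternatingNormSum σ n b x) + a * alternatingNormSum σ n b x =
      (1 - (-1) ^ n * partialNorm σ n b) * x := by
  rw [map_alternatingNormSum_add_mul σ hba, map_partialNorm_of_pow_eq_one hσ, hσ,
    RingHom.one_def, RingHom.id_apply]
  ring

lemma pow_apply_of_forall_eq_pow {σ : R →+* R} {q : ℕ} (hσ : ∀ x, σ x = x ^ q) (j : ℕ) (x : R) :
    (σ ^ j) x = x ^ q ^ j := by
  rw [RingHom.coe_pow, funext hσ, pow_iterate]

lemma partialNorm_eq_pow {σ : R →+* R} {q : ℕ} (hq : 2 ≤ q) (hσ : ∀ x, σ x = x ^ q) (m : ℕ)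
    (a : R) : partialNorm σ m a = a ^ ((q ^ m - 1) / (q - 1)) := by
  simp only [partialNorm, pow_apply_of_forall_eq_pow hσ, prod_pow_eq_pow_sum, Nat.geomSum_eq hq]

lemma alternatingNormSum_eq_sum_pow {σ : R →+* R} {q r : ℕ} (hq : 2 ≤ q) (hr : 0 < r)
    (hσ : ∀ x, σ x = x ^ q ^ r) (m : ℕ) (b x : R) :
    alternatingNormSum σ m b x = ∑ i ∈ range m,
      (-1) ^ i * b ^ ((q ^ ((i + 1) * r) - 1) / (q ^ r - 1)) * x ^ q ^ (i * r) := by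
  have hqr : 2 ≤ q ^ r := hq.trans (Nat.le_self_pow hr.ne' q)
  simp only [alternatingNormSum, partialNorm_eq_pow hqr hσ, pow_apply_of_forall_eq_pow hσ,
    ← pow_mul, mul_comm r]

end CommRing

section Field

variable {F : Type*} [Field F]

lemma partialNorm_inv (σ : F →+* F) (m : ℕ) (a : F) :
    partialNorm σ m a⁻¹ = (partialNorm σ m a)⁻¹ := by
  simp only [partialNorm, map_inv₀, prod_inv_distrib]

lemma partialNorm_ne_zero (σ : F →+* F) (m : ℕ) {a : F} (ha : a ≠ 0) : partialNorm σ m a ≠ 0 :=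
  prod_ne_zero_iff.2 fun j _ => (map_ne_zero (σ ^ j)).2 ha

lemma exists_alternatingNormSum_ne_zero {σ : F →+* F} {n : ℕ} (hn : 0 < n) (hσ : orderOf σ = n)
    {b : F} (hb : b ≠ 0) : ∃ x, alternatingNormSum σ n b x ≠ 0 := by
  by_contra! hzero
  have hinj : Function.Injective fun i : Fin n => ((σ ^ (i : ℕ) : F →+* F) : F →* F) :=
    fun i j hij => Fin.ext <| pow_injOn_Iio_orderOf (hσ ▸ i.isLt) (hσ ▸ j.isLt)
      (RingHom.coe_monoidHom_injective hij)
  have hindep := Fintype.linearIndependent_iff.1 ((linearIndependent_monoidHom F F).comp _ hinj)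
  have hcoeff := hindep (fun i => (-1) ^ (i : ℕ) * partialNorm σ (i + 1) b) (by
    ext x
    simpa [alternatingNormSum, ← Fin.sum_univ_eq_sum_range] using hzero x) ⟨0, hn⟩
  exact mul_ne_zero (pow_ne_zero _ (neg_ne_zero.2 one_ne_zero)) (partialNorm_ne_zero σ _ hb) hcoeff

lemma one_sub_neg_one_pow_mul_inv_eq_div {n : ℕ} (hn : 0 < n) {N : F} (hN : N ≠ 0) :
    1 - (-1) ^ n * N⁻¹ = (N + (-1) ^ (n - 1)) / N := by
  obtain ⟨m, rfl⟩ := Nat.exists_eq_succ_of_ne_zero hn.ne'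
  rw [Nat.succ_sub_one, pow_succ]
  field_simp
  ring

lemma neg_one_pow_mul_eq_one_iff {n : ℕ} (hn : 0 < n) {N : F} :
    (-1) ^ n * N = 1 ↔ N + (-1) ^ (n - 1) = 0 := by
  obtain ⟨m, rfl⟩ := Nat.exists_eq_succ_of_ne_zero hn.ne'
  rw [Nat.succ_sub_one, pow_succ]
  rcases neg_one_pow_eq_or F m with h | h <;> grind

lemma not_injective_map_add_mul {σ : F →+* F} {n : ℕ} (hn : 0 < n) (hσ : orderOf σ = n) {a : F}
    (ha : a ≠ 0) (hN : (-1) ^ n * partialNorm σ n a = 1) :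
    ¬ Function.Injective (fun x => σ x + a * x) := by
  intro hinj
  obtain ⟨x, hx⟩ := exists_alternatingNormSum_ne_zero hn hσ (inv_ne_zero ha)
  have hker : σ (alternatingNormSum σ n a⁻¹ x) + a * alternatingNormSum σ n a⁻¹ x = 0 := by
    rw [map_alternatingNormSum_add_mul_of_pow_eq_one (hσ ▸ pow_orderOf_eq_one σ)
      (inv_mul_cancel₀ ha), partialNorm_inv,
      one_sub_neg_one_pow_mul_inv_eq_div hn (partialNorm_ne_zero σ n ha),
      (neg_one_pow_mul_eq_one_iff hn).1 hN, zero_div, zero_mul]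
  exact hx (hinj (by simpa only [map_zero, mul_zero, add_zero] using hker))

/-- The map `x ↦ N / (N + (-1)^{n-1}) · ∑_{i<n} (-1)^i N_{i+1}(a)⁻¹ σ^i x`, with `N = N_n(a)`: the
inverse of `x ↦ σ x + a x` when `σ` has order `n` and `(-1)^n N ≠ 1`. -/
def binomialInverse (σ : F →+* F) (n : ℕ) (a x : F) : F :=
  partialNorm σ n a / (partialNorm σ n a + (-1) ^ (n - 1)) * alternatingNormSum σ n a⁻¹ x

section Inverse

variable {σ : F →+* F} {n : ℕ} {a : F}

lemma partialNorm_div_mul_one_sub_eq_one (hn : 0 < n) (ha : a ≠ 0)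
    (hN : (-1) ^ n * partialNorm σ n a ≠ 1) :
    partialNorm σ n a / (partialNorm σ n a + (-1) ^ (n - 1)) *
      (1 - (-1) ^ n * partialNorm σ n a⁻¹) = 1 := by
  have hNa := partialNorm_ne_zero σ n ha
  have hden := (neg_one_pow_mul_eq_one_iff hn).not.1 hN
  rw [partialNorm_inv, one_sub_neg_one_pow_mul_inv_eq_div hn hNa, div_mul_div_cancel₀ hden,
    div_self hNa]

lemma leftInverse_binomialInverse (hn : 0 < n) (hσ : σ ^ n = 1) (ha : a ≠ 0)
    (hN : (-1) ^ n * partialNorm σ n a ≠ 1) :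
    Function.LeftInverse (binomialInverse σ n a) (fun x => σ x + a * x) := fun x => by
  rw [binomialInverse, alternatingNormSum_map_add_mul_of_pow_eq_one hσ (inv_mul_cancel₀ ha),
    ← mul_assoc, partialNorm_div_mul_one_sub_eq_one hn ha hN, one_mul]

lemma rightInverse_binomialInverse (hn : 0 < n) (hσ : σ ^ n = 1) (ha : a ≠ 0)
    (hN : (-1) ^ n * partialNorm σ n a ≠ 1) :
    Function.RightInverse (binomialInverse σ n a) (fun x => σ x + a * x) := fun x => by
  have hfixed : σ (partialNorm σ n a / (partialNorm σ n a + (-1) ^ (n - 1))) =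
      partialNorm σ n a / (partialNorm σ n a + (-1) ^ (n - 1)) := by
    simp only [map_div₀, map_add, map_pow, map_neg, map_one, map_partialNorm_of_pow_eq_one hσ]
  simp only [binomialInverse, map_mul, hfixed]
  rw [mul_left_comm a, ← mul_add,
    map_alternatingNormSum_add_mul_of_pow_eq_one hσ (inv_mul_cancel₀ ha), ← mul_assoc,
    partialNorm_div_mul_one_sub_eq_one hn ha hN, one_mul]

end Inverse

theorem stmt_7_general {σ : F →+* F} {n : ℕ} (hn : 0 < n) (hσ : orderOf σ = n) {a : F}
    (ha : a ≠ 0) :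
    (Function.Bijective (fun x => σ x + a * x) ↔ (-1) ^ n * partialNorm σ n a ≠ 1) ∧
    ((-1) ^ n * partialNorm σ n a ≠ 1 →
      ∀ x, σ (binomialInverse σ n a x) + a * binomialInverse σ n a x = x ∧
        binomialInverse σ n a (σ x + a * x) = x) := by
  have hσn : σ ^ n = 1 := hσ ▸ pow_orderOf_eq_one σ
  have hleft := leftInverse_binomialInverse hn hσn ha
  have hright := rightInverse_binomialInverse hn hσn ha
  exact ⟨⟨fun hbij hN => not_injective_map_add_mul hn hσ ha hN hbij.injective,
      fun hN => ⟨(hleft hN).injective, (hright hN).surjective⟩⟩,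
    fun hN x => ⟨hright hN x, hleft hN x⟩⟩

lemma orderOf_eq_of_forall_eq_pow [Fintype F] {τ : F →+* F} {q n : ℕ} (hτ : ∀ x, τ x = x ^ q)
    (hn : 0 < n) (hF : Fintype.card F = q ^ n) : orderOf τ = n := by
  have hq : 1 < q := (Nat.one_lt_pow_iff hn.ne').1 (hF ▸ Fintype.one_lt_card)
  refine (orderOf_eq_iff hn).2 ⟨RingHom.ext fun x => ?_, fun m hmn hm hone => ?_⟩
  · rw [pow_apply_of_forall_eq_pow hτ, ← hF, FiniteField.pow_card, RingHom.one_def,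
      RingHom.id_apply]
  have hunits (u : Fˣ) : u ^ (q ^ m - 1) = 1 := by
    have hu : (u : F) ^ q ^ m = u := by rw [← pow_apply_of_forall_eq_pow hτ, hone]; rfl
    rw [← mul_left_inj u, pow_sub_one_mul (pow_pos (by lia) m).ne', one_mul]
    exact Units.ext (by rw [Units.val_pow_eq_pow_val, hu])
  have hdvd : q ^ n - 1 ∣ q ^ m - 1 := hF ▸ (FiniteField.forall_pow_eq_one_iff F _).1 hunits
  have hlt : q ^ m - 1 < q ^ n - 1 :=
    Nat.sub_lt_sub_right (Nat.one_le_pow _ _ (by lia)) (Nat.pow_lt_pow_right hq hmn)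
  exact hlt.not_ge (Nat.le_of_dvd (Nat.sub_pos_of_lt (Nat.one_lt_pow hm.ne' hq)) hdvd)

lemma exists_ringHom_forall_eq_pow [Fintype F] {q n : ℕ} (hq : IsPrimePow q)
    (hF : Fintype.card F = q ^ n) : ∃ τ : F →+* F, ∀ x, τ x = x ^ q := by
  obtain ⟨p, k, hp, -, rfl⟩ := hq
  have := Fact.mk hp.nat_prime
  rw [← pow_mul] at hF
  have := charP_of_card_eq_prime_pow hF
  exact ⟨iterateFrobenius F p k, iterateFrobenius_def p k⟩

lemma exists_ringHom_orderOf_eq_and_eq_pow [Fintype F] {q n r : ℕ} (hq : IsPrimePow q)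
    (hn : 0 < n) (hr : r.Coprime n) (hF : Fintype.card F = q ^ n) :
    ∃ σ : F →+* F, orderOf σ = n ∧ (∀ x, σ x = x ^ q ^ r) ∧
      ∀ a, partialNorm σ n a = a ^ ((q ^ n - 1) / (q - 1)) := by
  obtain ⟨τ, hτ⟩ := exists_ringHom_forall_eq_pow hq hF
  have hord := orderOf_eq_of_forall_eq_pow hτ hn hF
  refine ⟨τ ^ r, ?_, pow_apply_of_forall_eq_pow hτ r, fun a => ?_⟩
  · rw [Nat.Coprime.orderOf_pow (hord ▸ hr.symm), hord]
  · rw [partialNorm_pow_of_coprime (hord ▸ pow_orderOf_eq_one τ) hr,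
      partialNorm_eq_pow hq.two_le hτ]

end Field

/-- If `gcd(r,n) = 1`, then `L_r(x) = x^{q^r} + a x` permutes `F_{q^n}` iff `(-1)^n N(a) ≠ 1`
with `N(a) = a^{(q^n-1)/(q-1)}`; and when this holds,
`L_r⁻¹(x) = [N(a)/(N(a)+(-1)^{n-1})] ∑_{i=0}^{n-1} (-1)^i a^{-(q^{(i+1)r}-1)/(q^r-1)} x^{q^{ir}}`. -/
theorem stmt_7 (q n r : ℕ) (hq : IsPrimePow q) (hn : 0 < n) (hr : 0 < r)
    (hco : Nat.gcd r n = 1)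
    (F : Type*) [Field F] [Fintype F] (hF : Fintype.card F = q ^ n)
    (a : F) (ha : a ≠ 0) (N : F) (hN : N = a ^ ((q ^ n - 1) / (q - 1))) :
    (Function.Bijective (fun x : F => x ^ q ^ r + a * x) ↔ (-1 : F) ^ n * N ≠ 1) ∧
    ((-1 : F) ^ n * N ≠ 1 →
      ∀ x : F,
        (N / (N + (-1) ^ (n - 1)) *
            ∑ i ∈ Finset.range n,
              (-1 : F) ^ i * a⁻¹ ^ ((q ^ ((i + 1) * r) - 1) / (q ^ r - 1)) * x ^ q ^ (i * r))
              ^ q ^ r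
          + a * (N / (N + (-1) ^ (n - 1)) *
            ∑ i ∈ Finset.range n,
              (-1 : F) ^ i * a⁻¹ ^ ((q ^ ((i + 1) * r) - 1) / (q ^ r - 1)) * x ^ q ^ (i * r))
          = x ∧
        N / (N + (-1) ^ (n - 1)) *
            ∑ i ∈ Finset.range n,
              (-1 : F) ^ i * a⁻¹ ^ ((q ^ ((i + 1) * r) - 1) / (q ^ r - 1)) *
                (x ^ q ^ r + a * x) ^ q ^ (i * r)
          = x) := by
  obtain ⟨σ, hord, hσ, hnorm⟩ := exists_ringHom_orderOf_eq_and_eq_pow hq hn hco hF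
  simpa only [binomialInverse, alternatingNormSum_eq_sum_pow hq.two_le hr hσ, hσ, hnorm, ← hN]
    using stmt_7_general hn hord ha
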